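/- Let G be a finite Frobenius group with Frobenius complement B, i.e., B is a proper nontrivial subgroup of G with B ∩ gBg⁻¹ = {1} for all g ∈ G \ B. Then (Frobenius's theorem) G has a normal subgroup N (the Frobenius kernel) with G = N ⋊ B, and the conjugation action of B on N is fixed-point-free. -/

import Mathlib

namespace FrobAux
open Representation Module

theorem trace_split {V : Type*} [AddCommGroup V] [Module ℂ V] [FiniteDimensional ℂ V]
    (W : Submodule ℂ V) (f : V →ₗ[ℂ] V) (h : ∀ v ∈ W, f v ∈ W) (h' : W ≤ W.comap f) :
    LinearMap.trace ℂ V f = LinearMap.trace ℂ W (f.restrict h)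
      + LinearMap.trace ℂ (V ⧸ W) (W.mapQ W f h') := by
  obtain ⟨s, hs⟩ := W.mkQ.exists_rightInverse_of_surjective (Submodule.range_mkQ W)
  have hs' : ∀ x, W.mkQ (s x) = x := fun x => congr($hs x)
  let p : V →ₗ[ℂ] W := (LinearMap.id - s ∘ₗ W.mkQ).codRestrict W (by
    intro c
    refine (Submodule.Quotient.mk_eq_zero W).1 ?_
    change W.mkQ _ = 0
    simp only [LinearMap.sub_apply, LinearMap.id_apply, LinearMap.comp_apply, map_sub, hs', sub_self])
  have hp : ∀ v : V, (p v : V) = v - s (W.mkQ v) := fun v => rfl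
  have hpw : ∀ w : W, p w = w := by
    intro w
    ext
    rw [hp]
    have : W.mkQ (w : V) = 0 := by simp
    rw [this]; simp
  have e1 : f = (f ∘ₗ W.subtype) ∘ₗ p + (f ∘ₗ s) ∘ₗ W.mkQ := by
    ext v
    simp only [LinearMap.add_apply, LinearMap.comp_apply, Submodule.subtype_apply, hp, map_sub]
    simp
  conv_lhs => rw [e1]
  rw [map_add, LinearMap.trace_comp_comm', LinearMap.trace_comp_comm' _ (f ∘ₗ s)]
  congr 2
  · ext w
    simp only [LinearMap.comp_apply, Submodule.subtype_apply]
    rw [show p (f w) = p ((⟨f w, h w w.2⟩ : W) : V) from rfl, hpw]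
    rfl
  · ext x
    have : W.mapQ W f h' (W.mkQ (s (W.mkQ x))) = W.mkQ (f (s (W.mkQ x))) := rfl
    rw [hs'] at this
    exact this.symm

variable {G : Type*} [Group G]

def IsCh (f : G → ℂ) : Prop := ∃ n : ℕ, ∃ ρ : Representation ℂ G (Fin n → ℂ), ρ.character = f

theorem exists_rep {V : Type*} [AddCommGroup V] [Module ℂ V] [FiniteDimensional ℂ V]
    (ρ : Representation ℂ G V) : ∃ σ : Representation ℂ G (Fin (finrank ℂ V) → ℂ),
      σ.character = ρ.character := by
  let e := (finBasis ℂ V).equivFun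
  let σ : Representation ℂ G (Fin (finrank ℂ V) → ℂ) :=
    (e.conjAlgEquiv ℂ : _ →* _).comp ρ
  refine ⟨σ, funext fun g => ?_⟩
  exact LinearMap.trace_conj' (ρ g) e

theorem isCh_of {V : Type*} [AddCommGroup V] [Module ℂ V] [FiniteDimensional ℂ V]
    (ρ : Representation ℂ G V) : IsCh ρ.character := by
  obtain ⟨σ, h⟩ := exists_rep ρ
  exact ⟨_, σ, h⟩

theorem char_split {V : Type*} [AddCommGroup V] [Module ℂ V] [FiniteDimensional ℂ V]
    (ρ : Representation ℂ G V) (W : Submodule ℂ V) (h : ∀ g, W ≤ W.comap (ρ g)) (g : G):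
    ρ.character g = (ρ.subrepresentation W h).character g + (ρ.quotient W h).character g :=
  trace_split W (ρ g) (h g) (h g)

theorem rep_eq_one [Finite G] {V : Type*} [AddCommGroup V] [Module ℂ V] [FiniteDimensional ℂ V]
    (ρ : Representation ℂ G V) (g : G)
    (h : ∀ i : ℤ, ρ.character (g ^ i) = ρ.character 1) : ρ g = 1 := by
  let σ : Representation ℂ (Subgroup.zpowers g) V := ρ.comp (Subgroup.zpowers g).subtype
  have := Fintype.ofFinite (Subgroup.zpowers g)
  have hne : (Nat.card (Subgroup.zpowers g) : ℂ) ≠ 0 := by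
    exact_mod_cast Nat.card_pos.ne'
  have : Invertible (Nat.card (Subgroup.zpowers g) : ℂ) := invertibleOfNonzero hne
  have h1 := card_inv_mul_sum_char_eq_finrank σ
  have h2 : ∀ x, σ.character x = finrank ℂ V := by
    rintro ⟨x, i, rfl⟩
    rw [← char_one ρ, ← h i]; rfl
  simp only [h2, Finset.sum_const, Finset.card_univ, nsmul_eq_mul, Fintype.card_eq_nat_card] at h1
  rw [inv_mul_cancel_left₀ hne] at h1
  have h3 : invariants σ = ⊤ := Submodule.eq_top_of_finrank_eq (by exact_mod_cast h1.symm)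
  ext v
  have : v ∈ invariants σ := h3 ▸ trivial
  exact this ⟨g, Subgroup.mem_zpowers g⟩

/-- generalized character of norm one and positive degree is a character -/
theorem isCh_sub [Fintype G] (n : ℕ) : ∀ (m : ℕ) (ρ : Representation ℂ G (Fin n → ℂ))
    (σ : Representation ℂ G (Fin m → ℂ)) (f : G → ℂ)
    (_ : ∀ g, f g = ρ.character g - σ.character g) (_ : m ≤ n)
    (_ : ∑ g, f g * f g⁻¹ = Nat.card G), IsCh f := by
  induction n using Nat.strong_induction_on with
  | _ n ih =>
  intro m ρ σ f hf hmn hnorm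
  have hne : (Nat.card G : ℂ) ≠ 0 := by exact_mod_cast Nat.card_pos.ne'
  have : Invertible (Nat.card G : ℂ) := invertibleOfNonzero hne
  by_cases hT : ∃ T : IntertwiningMap ρ σ, T ≠ 0
  · obtain ⟨T, hT⟩ := hT
    let K := LinearMap.ker T.toLinearMap
    let R := LinearMap.range T.toLinearMap
    have hK : ∀ g, K ≤ K.comap (ρ g) := fun g => T.ker.apply_mem_toSubmodule g
    have hR : ∀ g, R ≤ R.comap (σ g) := fun g => T.range.apply_mem_toSubmodule g
    have e : (ρ.quotient K hK).Equiv (σ.subrepresentation R hR) := by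
      refine Representation.Equiv.mk T.toLinearMap.quotKerEquivRange ?_
      intro g
      refine LinearMap.ext fun x => ?_
      obtain ⟨v, rfl⟩ := K.mkQ_surjective x
      exact Subtype.ext (IntertwiningMap.isIntertwining (f := T) ..)
    obtain ⟨ρ', h1⟩ := exists_rep (ρ.subrepresentation K hK)
    obtain ⟨σ', h2⟩ := exists_rep (σ.quotient R hR)
    have h3 : finrank ℂ K < n := by
      have : K ≠ ⊤ := fun h => hT (IntertwiningMap.ext (LinearMap.ker_eq_top.1 h))
      simpa using Submodule.finrank_lt (lt_top_iff_ne_top.2 this).ne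
    have h4 : finrank ℂ R + finrank ℂ K = n := by
      simpa using T.toLinearMap.finrank_range_add_finrank_ker
    have h5 : finrank ℂ (_ ⧸ R) + finrank ℂ R = m := by
      simpa using R.finrank_quotient_add_finrank
    refine ih _ h3 _ ρ' σ' f ?_ (by omega) hnorm
    intro g
    rw [hf, h1, h2, char_split ρ K hK, char_split σ R hR, char_iso e]
    ring
  · push Not at hT
    have hs : Subsingleton (IntertwiningMap ρ σ) := ⟨fun a b => by rw [hT a, hT b]⟩
    have a1 := card_inv_mul_sum_char_mul_char_eq_finrank ρ σ
    have a2 := card_inv_mul_sum_char_mul_char_eq_finrank ρ ρ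
    have a3 := card_inv_mul_sum_char_mul_char_eq_finrank σ σ
    rw [finrank_zero_of_subsingleton, inv_mul_eq_iff_eq_mul₀ hne] at a1
    rw [inv_mul_eq_iff_eq_mul₀ hne] at a2 a3
    have a4 : ∑ g, ρ.character g * σ.character g⁻¹ = ∑ g, σ.character g * ρ.character g⁻¹ := by
      rw [← Equiv.sum_comp (Equiv.inv G)]
      simp [mul_comm]
    simp only [hf, sub_mul, mul_sub, Finset.sum_sub_distrib, a4, a1, a2, a3] at hnorm
    have a5 : finrank ℂ (IntertwiningMap ρ ρ) + finrank ℂ (IntertwiningMap σ σ) = 1 := by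
      have : (Nat.card G : ℂ) * (finrank ℂ (IntertwiningMap ρ ρ) + finrank ℂ (IntertwiningMap σ σ)) = Nat.card G * 1:= by
        linear_combination hnorm
      exact_mod_cast mul_left_cancel₀ hne this
    have key : ∀ (k : ℕ) (τ : Representation ℂ G (Fin k → ℂ)),
        finrank ℂ (IntertwiningMap τ τ) = 0 → k = 0 := by
      intro k τ h
      rw [← (invariantsEquivIntertwiningMap τ τ).finrank_eq] at h
      have h' : (τ.linHom τ).invariants = ⊥ := Submodule.finrank_eq_zero.1 h
      have : Subsingleton (τ.linHom τ).invariants := by rw [h']; infer_instance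
      have := (invariantsEquivIntertwiningMap τ τ).symm.injective.subsingleton
      have h0 : IntertwiningMap.id τ = 0 := Subsingleton.elim _ _
      by_contra hk
      have : Nonempty (Fin k) := ⟨⟨0, by omega⟩⟩
      have : (1 : Fin k → ℂ) = 0 := by
        exact congr($h0 1)
      exact one_ne_zero this
    have hm : m = 0 := by
      rcases Nat.eq_zero_or_pos (finrank ℂ (IntertwiningMap σ σ)) with h | h
      · exact key _ _ h
      · have := key _ ρ (by omega)
        omega
    subst hm
    refine ⟨n, ρ, funext fun g => ?_⟩
    rw [hf, show σ.character g = 0 from ?_, sub_zero]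
    rw [Representation.character, show σ g = 0 from Subsingleton.elim _ _, map_zero]


theorem exists_irred [Finite G] (b : G) (hb : b ≠ 1) :
    ∃ (n : ℕ) (ρ : Representation ℂ G (Fin n → ℂ)), ρ b ≠ 1 ∧ IsIrreducible ρ := by
  classical
  have hex : ∃ (n : ℕ) (ρ : Representation ℂ G (Fin n → ℂ)), ρ b ≠ 1 := by
    let τ : Representation ℂ G (MonoidAlgebra ℂ G) := leftRegular ℂ G
    have : FiniteDimensional ℂ (MonoidAlgebra ℂ G) := by
      have := Fintype.ofFinite G
      infer_instance
    obtain ⟨σ, h⟩ := exists_rep τ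
    refine ⟨_, σ, fun hc => ?_⟩
    have h1 : τ b = 1 := by
      apply rep_eq_one
      intro i
      rw [← h]
      have : σ (b ^ i) = 1 := by
        have h2 : b ∈ σ.ker := hc
        exact (σ.ker.zpow_mem h2 i : _)
      simp [Representation.character, this]
    have h2 := congr($h1 (MonoidAlgebra.single 1 1))
    simp [τ, MonoidAlgebra.single_left_inj] at h2
    exact hb h2
  obtain ⟨n, ⟨ρ, hρ⟩, hfm⟩ : ∃ n : ℕ, (∃ ρ : Representation ℂ G (Fin n → ℂ), ρ b ≠ 1) ∧
      ∀ m < n, ¬ ∃ ρ : Representation ℂ G (Fin m → ℂ), ρ b ≠ 1 :=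
    ⟨Nat.find hex, Nat.find_spec hex, fun m hm => Nat.find_min hex hm⟩
  have hmin : ∀ (V : Type) [AddCommGroup V] [Module ℂ V] [FiniteDimensional ℂ V]
    (τ : Representation ℂ G V), finrank ℂ V < n → ∀ i : ℤ, τ.character (b ^ i) = τ.character 1 := by
    intro V _ _ _ τ hV i
    obtain ⟨σ, h⟩ := exists_rep τ
    have h1 : σ b = 1 := by
      by_contra hc
      exact hfm _ hV ⟨σ, hc⟩
    have : σ (b ^ i) = 1 := by
      have h2 : b ∈ σ.ker := h1
      exact (σ.ker.zpow_mem h2 i : _)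
    rw [← h]
    simp [Representation.character, this]
  refine ⟨n, ρ, hρ, ?_⟩
  have hn : n ≠ 0 := by
    intro h0
    have : Subsingleton (Fin n → ℂ) := by rw [h0]; infer_instance
    exact hρ (LinearMap.ext fun v => this.elim _ _)
  have : Nontrivial (Subrepresentation ρ) := by
    refine ⟨⊥, ⊤, fun h => ?_⟩
    have h2 : (⊥ : Submodule ℂ (Fin n → ℂ)) = ⊤ := congr(($h).toSubmodule)
    have h3 := congrArg (fun W : Submodule ℂ (Fin n → ℂ) => finrank ℂ W) h2
    simp at h3
    exact hn h3.symm
  refine ⟨fun W => ?_⟩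
  by_contra! hW
  obtain ⟨hW1, hW2⟩ := hW
  have w1 : W.toSubmodule ≠ ⊥ := fun h => hW1 (Subrepresentation.toSubmodule_injective h)
  have w2 : W.toSubmodule ≠ ⊤ := fun h => hW2 (Subrepresentation.toSubmodule_injective h)
  have f1 : finrank ℂ W.toSubmodule < n := by
    simpa using Submodule.finrank_lt w2
  have f2 : 0 < finrank ℂ W.toSubmodule := by
    rw [Nat.pos_iff_ne_zero]
    exact fun h => w1 (Submodule.finrank_eq_zero.1 h)
  have f3 : finrank ℂ (_ ⧸ W.toSubmodule) + finrank ℂ W.toSubmodule = n := by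
    simpa using W.toSubmodule.finrank_quotient_add_finrank
  apply hρ
  apply rep_eq_one
  intro i
  have hW : ∀ g, W.toSubmodule ≤ W.toSubmodule.comap (ρ g) := fun g => W.apply_mem_toSubmodule g
  rw [char_split ρ _ hW, char_split ρ _ hW, hmin _ _ (by omega), hmin _ _ (by omega)]

open Classical in
noncomputable def ext0 {M : Type*} [Zero M] (B : Subgroup G) (f : B → M) (g : G) : M :=
  if h : g ∈ B then f ⟨g, h⟩ else 0

theorem ext0_mem {M : Type*} [Zero M] (B : Subgroup G) (f : B → M) {g : G} (h : g ∈ B) :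
    ext0 B f g = f ⟨g, h⟩ := dif_pos h

theorem ext0_not {M : Type*} [Zero M] (B : Subgroup G) (f : B → M) {g : G} (h : g ∉ B) :
    ext0 B f g = 0 := dif_neg h

theorem sum_ext0 [Fintype G] (B : Subgroup G) [Fintype B] (f : B → ℂ) :
    ∑ g, ext0 B f g = ∑ b, f b := by
  classical
  have : ∀ b : B, f b = ext0 B f b := fun b => (ext0_mem B f b.2).symm
  simp only [this]
  refine (Finset.sum_of_injOn (fun b : B => (b : G)) Subtype.val_injective.injOn (by simp)
    ?_ (by simp)).symm
  intro x _ hx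
  exact ext0_not _ _ (by simpa using hx)

theorem ext0_conj (B : Subgroup G) {d : ℕ} (φ : Representation ℂ B (Fin d → ℂ)) {b : G}
    (hb : b ∈ B) (a : G) : ext0 B φ.character (b⁻¹ * a * b) = ext0 B φ.character a := by
  by_cases ha : a ∈ B
  · have hb' : b⁻¹ * a * b ∈ B :=
      B.mul_mem (B.mul_mem (B.inv_mem hb) ha) hb
    rw [ext0_mem B _ ha, ext0_mem B _ hb']
    have := φ.char_conj ⟨_, ha⟩ ⟨b, hb⟩⁻¹
    rw [inv_inv] at this
    exact this
  · rw [ext0_not B _ ha, ext0_not]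
    rwa [B.mul_mem_cancel_right hb, B.mul_mem_cancel_left (B.inv_mem hb)]

theorem exists_ind [Fintype G] (B : Subgroup G) {d : ℕ} (φ : Representation ℂ B (Fin d → ℂ)) :
    ∃ (k : ℕ) (σ : Representation ℂ G (Fin k → ℂ)),
      ∀ g, Nat.card B * σ.character g = ∑ t : G, ext0 B φ.character (t⁻¹ * g * t) := by
  classical
  let s : G ⧸ B → G := Quotient.out
  have hs : ∀ x, ((s x : G) : G ⧸ B) = x := fun x => Quotient.out_eq' x
  let φm : B →* Matrix (Fin d) (Fin d) ℂ :=
    (LinearMap.toMatrixAlgEquiv' : _ ≃ₐ[ℂ] Matrix (Fin d) (Fin d) ℂ).toAlgHom.toMonoidHom.comp φ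
  let F : G → Matrix (Fin d) (Fin d) ℂ := ext0 B φm
  have hF1 : F 1 = 1 := by
    simp only [F]
    rw [ext0_mem B φm B.one_mem]
    exact map_one φm
  have hFm : ∀ a b, b ∈ B → F a * F b = F (a * b) := by
    intro a b hb
    by_cases ha : a ∈ B
    · simp only [F]
      rw [ext0_mem B φm ha, ext0_mem B φm hb, ext0_mem B φm (B.mul_mem ha hb), ← map_mul]
      rfl
    · simp only [F]
      rw [ext0_not B φm ha, ext0_not B φm (fun h => ha ((B.mul_mem_cancel_right hb).1 h)), zero_mul]
  let M : G →* Matrix ((G ⧸ B) × Fin d) ((G ⧸ B) × Fin d) ℂ :=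
    { toFun := fun g => Matrix.of fun p q => F ((s p.1)⁻¹ * g * s q.1) p.2 q.2
      map_one' := by
        ext ⟨x, i⟩ ⟨y, j⟩
        simp only [Matrix.of_apply, mul_one]
        by_cases hxy : x = y
        · subst hxy
          rw [inv_mul_cancel, hF1]
          simp [Matrix.one_apply]
        · have : (s x)⁻¹ * s y ∉ B := by
            rw [← QuotientGroup.eq, hs, hs]; exact hxy
          simp only [F]
          rw [ext0_not B φm this]
          simp [hxy]
      map_mul' := by
        intro g h
        ext ⟨x, i⟩ ⟨z, j⟩
        simp only [Matrix.of_apply, Matrix.mul_apply, Fintype.sum_prod_type]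
        rw [Finset.sum_eq_single ((h * s z : G) : G ⧸ B)]
        · rw [← Matrix.mul_apply, hFm]
          · exact congrArg (fun a => F a i j) (by group)
          · rw [mul_assoc, ← QuotientGroup.eq, hs]
        · intro y _ hy
          have : (s y)⁻¹ * h * s z ∉ B := by
            rw [mul_assoc, ← QuotientGroup.eq, hs]; exact hy
          simp only [F]
          rw [ext0_not B φm this]
          simp
        · simp }
  let σ : Representation ℂ G ((G ⧸ B) × Fin d → ℂ) :=
    (Matrix.toLinAlgEquiv' : Matrix ((G ⧸ B) × Fin d) ((G ⧸ B) × Fin d) ℂ ≃ₐ[ℂ] _).toAlgHom.toMonoidHom.comp M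
  obtain ⟨σ', hσ'⟩ := exists_rep σ
  refine ⟨_, σ', fun g => ?_⟩
  have htr : ∀ a, (F a).trace = ext0 B φ.character a := by
    intro a
    by_cases ha : a ∈ B
    · simp only [F]
      rw [ext0_mem B φm ha, ext0_mem B _ ha]
      exact (LinearMap.trace_eq_matrix_trace ℂ (Pi.basisFun ℂ (Fin d)) _).symm
    · simp only [F]
      rw [ext0_not B φm ha, ext0_not B _ ha, Matrix.trace_zero]
  have h1 : σ.character g = ∑ x : G ⧸ B, ext0 B φ.character ((s x)⁻¹ * g * s x) := by
    have : σ.character g = (M g).trace := Matrix.trace_toLin'_eq _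
    rw [this]
    simp only [← htr, Matrix.trace, Fintype.sum_prod_type, Matrix.diag]
    rfl
  let m : (G ⧸ B) × B → G := fun p => s p.1 * p.2
  have hm1 : ∀ p, ((m p : G) : G ⧸ B) = p.1 := by
    intro p
    simp only [m]
    rw [QuotientGroup.mk_mul_of_mem _ p.2.2, hs]
  have hm : Function.Bijective m := by
    constructor
    · rintro ⟨x, b⟩ ⟨y, c⟩ h
      have h1 : x = y := (hm1 (x, b)).symm.trans ((congrArg _ h).trans (hm1 (y, c)))
      subst h1
      have h2 : s x * (b : G) = s x * c := h
      simpa using h2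
    · intro t
      refine ⟨((t : G ⧸ B), ⟨(s t)⁻¹ * t, ?_⟩), ?_⟩
      · rw [← QuotientGroup.eq, hs]
      · simp [m]
  rw [hσ', h1, ← Function.Bijective.sum_comp hm, Fintype.sum_prod_type, Finset.mul_sum]
  refine Finset.sum_congr rfl fun x _ => ?_
  have : ∀ b : B, ext0 B φ.character ((m (x, b))⁻¹ * g * m (x, b))
      = ext0 B φ.character ((s x)⁻¹ * g * s x) := by
    intro b
    have : (m (x, b))⁻¹ * g * m (x, b) = (b : G)⁻¹ * ((s x)⁻¹ * g * s x) * b := by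
      simp only [m]; group
    rw [this]
    exact ext0_conj B φ b.2 _
  simp [this]

theorem exists_sep [Fintype G] (B : Subgroup G)
    (hm : ∀ g b : G, b ∈ B → b ≠ 1 → g⁻¹ * b * g ∈ B → g ∈ B) (b0 : G) (hb0 : b0 ∈ B)
    (hb1 : b0 ≠ 1) : ∃ (n : ℕ) (ρ : Representation ℂ G (Fin n → ℂ)), ρ b0 ≠ 1 ∧
      ∀ x, (∀ t, t⁻¹ * x * t ∈ B → x = 1) → ρ x = 1 := by
  classical
  obtain ⟨d, φ, hφ, hirr⟩ := exists_irred (G := B) ⟨b0, hb0⟩ (by simpa using hb1)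
  obtain ⟨k1, σ1, h1⟩ := exists_ind B φ
  obtain ⟨k2, σ2, h2⟩ := exists_ind B (Representation.trivial ℂ B (Fin d → ℂ))
  obtain ⟨ρ1, hρ1⟩ := exists_rep (σ1.prod (Representation.trivial ℂ G (Fin d → ℂ)))
  have hρ1' : ∀ g, ρ1.character g = σ1.character g + d := by
    intro g
    rw [hρ1]
    have : LinearMap.trace ℂ (Fin d → ℂ) (Representation.trivial ℂ G (Fin d → ℂ) g) = d := by
      simp [Representation.trivial]
    rw [← this]
    exact LinearMap.trace_prodMap' (σ1 g) _
  have ht : (Representation.trivial ℂ B (Fin d → ℂ)).character = fun _ => (d : ℂ) := by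
    funext g
    simp [Representation.trivial, Representation.character]
  rw [ht] at h2
  have hc : (Nat.card B : ℂ) ≠ 0 := by exact_mod_cast Nat.card_pos.ne'
  have hφ1 : φ.character 1 = d := by simp
  have hk : k1 = k2 := by
    have e1 := h1 1
    have e2 := h2 1
    simp only [mul_one, inv_mul_cancel, ext0_mem B _ B.one_mem] at e1 e2
    rw [show (⟨1, B.one_mem⟩ : B) = 1 from rfl, hφ1, ← e2] at e1
    have := mul_left_cancel₀ hc e1
    simpa using this
  set ψ : G → ℂ := fun g => ext0 B φ.character g - ext0 B (fun _ => (d : ℂ)) g with hψ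
  have hψB : ∀ b (hb : b ∈ B), ψ b = φ.character ⟨b, hb⟩ - d := by
    intro b hb
    simp only [hψ, ext0_mem B _ hb]
  have hψn : ∀ b, b ∉ B → ψ b = 0 := by
    intro b hb
    simp only [hψ, ext0_not B _ hb, sub_self]
  have hψ1 : ψ 1 = 0 := by
    rw [hψB 1 B.one_mem, show (⟨1, B.one_mem⟩ : B) = 1 from rfl, hφ1, sub_self]
  have hψc : ∀ b ∈ B, ∀ a, ψ (b⁻¹ * a * b) = ψ a := by
    intro b hb a
    simp only [hψ]
    rw [ext0_conj B φ hb, ← ht, ext0_conj B _ hb]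
  set h : G → ℂ := fun g => σ1.character g - σ2.character g with hh
  have hch : ∀ g, Nat.card B * h g = ∑ t : G, ψ (t⁻¹ * g * t) := by
    intro g
    simp only [hh, hψ, mul_sub, h1, h2, Finset.sum_sub_distrib]
  have hconj : ∀ t g, h (t⁻¹ * g * t) = h g := by
    intro t g
    have e1 := σ1.char_conj g t⁻¹
    have e2 := σ2.char_conj g t⁻¹
    rw [inv_inv] at e1 e2
    simp only [hh, e1, e2]
  have hhB : ∀ b ∈ B, h b = ψ b := by
    intro b hb
    apply mul_left_cancel₀ hc
    rw [hch]
    by_cases hb' : b = 1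
    · simp [hb', hψ1]
    · have : ∀ t : G, ψ (t⁻¹ * b * t) = ext0 B (fun _ => ψ b) t := by
        intro t
        by_cases htB : t ∈ B
        · rw [hψc t htB, ext0_mem B _ htB]
        · rw [ext0_not B _ htB, hψn]
          exact fun h => htB (hm t b hb hb' h)
      simp only [this]
      rw [sum_ext0]
      simp
  have hsum : Nat.card B * ∑ g, h g = Nat.card G * ∑ b : B, (φ.character b - d) := by
    rw [Finset.mul_sum]
    simp only [hch]
    rw [Finset.sum_comm]
    have : ∀ t : G, ∑ g, ψ (t⁻¹ * g * t) = ∑ b : B, (φ.character b - d) := by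
      intro t
      rw [← sum_ext0 B]
      refine Fintype.sum_equiv (MulAut.conj t⁻¹).toEquiv _ _ ?_
      intro g
      have : (MulAut.conj t⁻¹).toEquiv g = t⁻¹ * g * t := by simp
      rw [this]
      by_cases hb : t⁻¹ * g * t ∈ B
      · rw [hψB _ hb, ext0_mem B _ hb]
      · rw [hψn _ hb, ext0_not B _ hb]
    simp [this, mul_sub]
  have hsum2 : Nat.card B * ∑ g, h g * h g⁻¹ =
      Nat.card G * ∑ b : B, (φ.character b - d) * (φ.character b⁻¹ - d) := by
    rw [Finset.mul_sum]
    simp only [← mul_assoc, hch, Finset.sum_mul]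
    rw [Finset.sum_comm]
    have : ∀ t : G, ∑ g, ψ (t⁻¹ * g * t) * h g⁻¹ =
        ∑ b : B, (φ.character b - d) * (φ.character b⁻¹ - d) := by
      intro t
      rw [← sum_ext0 B]
      refine Fintype.sum_equiv (MulAut.conj t⁻¹).toEquiv _ _ ?_
      intro g
      have e : (MulAut.conj t⁻¹).toEquiv g = t⁻¹ * g * t := by simp
      rw [e, ← hconj t g⁻¹, show t⁻¹ * g⁻¹ * t = (t⁻¹ * g * t)⁻¹ by group]
      by_cases hb : t⁻¹ * g * t ∈ B
      · rw [hhB _ (B.inv_mem hb), hψB _ hb, hψB _ (B.inv_mem hb), ext0_mem B _ hb]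
        rfl
      · rw [hψn _ hb, ext0_not B _ hb, zero_mul]
    simp [this]
  have hinvG : ∑ g, h g⁻¹ = ∑ g, h g := Equiv.sum_comp (Equiv.inv G) h
  have hinvB : ∑ b : B, φ.character b⁻¹ = ∑ b : B, φ.character b :=
    Equiv.sum_comp (Equiv.inv B) φ.character
  have horth : ∑ b : B, φ.character b * φ.character b⁻¹ = Nat.card B := by
    have : Invertible (Nat.card B : ℂ) := invertibleOfNonzero hc
    have a2 := card_inv_mul_sum_char_mul_char_eq_finrank φ φ
    rw [inv_mul_eq_iff_eq_mul₀ hc] at a2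
    rw [a2, IsIrreducible.finrank_intertwiningMap_self]
    simp
  let f : G → ℂ := fun g => h g + d
  have hnorm : ∑ g, f g * f g⁻¹ = Nat.card G := by
    apply mul_left_cancel₀ hc
    have e1 : ∑ g, f g * f g⁻¹ = ∑ g, h g * h g⁻¹ + 2 * d * ∑ g, h g + Nat.card G * d ^ 2 := by
      simp only [f, add_mul, mul_add, Finset.sum_add_distrib, ← Finset.mul_sum, ← Finset.sum_mul,
        hinvG]
      simp
      ring
    have e2 : ∑ b : B, (φ.character b - d) * (φ.character b⁻¹ - d) =
        Nat.card B - 2 * d * ∑ b : B, φ.character b + Nat.card B * d ^ 2 := by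
      simp only [sub_mul, mul_sub, Finset.sum_sub_distrib, ← Finset.mul_sum, ← Finset.sum_mul,
        hinvB, horth]
      simp
      ring
    have e3 : ∑ b : B, (φ.character b - d) = ∑ b : B, φ.character b - Nat.card B * d := by
      simp [Finset.sum_sub_distrib]
    rw [e2] at hsum2
    rw [e3] at hsum
    rw [e1]
    linear_combination hsum2 + 2 * d * hsum
  obtain ⟨n, ρ, hρ⟩ := isCh_sub _ k2 ρ1 σ2 f (by
    intro g
    rw [hρ1']
    simp only [f, hh]
    ring) (by simp [hk]) hnorm
  have hfB : ∀ b : B, f b = φ.character b := by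
    intro b
    simp only [f]
    rw [hhB _ b.2, hψB _ b.2]
    simp
  refine ⟨n, ρ, fun hc => hφ ?_, fun x hx => ?_⟩
  · apply rep_eq_one
    intro i
    have : ρ (b0 ^ i) = 1 := by
      have h2 : b0 ∈ ρ.ker := hc
      exact (ρ.ker.zpow_mem h2 i : _)
    rw [← hfB, ← hfB, ← hρ]
    simp [Representation.character, this]
  · apply rep_eq_one
    intro i
    rw [hρ]
    simp only [f]
    congr 1
    apply mul_left_cancel₀ hc
    rw [hch, hch]
    refine Finset.sum_congr rfl fun t _ => ?_
    simp only [mul_one, inv_mul_cancel, hψ1]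
    by_cases hB : t⁻¹ * x ^ i * t ∈ B
    · by_cases h0 : t⁻¹ * x ^ i * t = 1
      · rw [h0, hψ1]
      · exfalso
        have h3 : t⁻¹ * x * t ∈ B := by
          refine hm _ _ hB h0 ?_
          have : (t⁻¹ * x * t)⁻¹ * (t⁻¹ * x ^ i * t) * (t⁻¹ * x * t) = t⁻¹ * x ^ i * t := by
            group
          rwa [this]
        apply h0
        rw [hx t h3]
        simp
    · exact hψn _ hB

theorem card_ker_ge [Fintype G] (B : Subgroup G) (K : Subgroup G)
    (hK : ∀ x, (∀ t, t⁻¹ * x * t ∈ B → x = 1) → x ∈ K) : Nat.card G ≤ Nat.card K * Nat.card B := by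
  classical
  let m : (G ⧸ B) × {b : B // b ≠ 1} → G := fun p => p.1.out * p.2.1 * p.1.out⁻¹
  have hcov : (Finset.univ : Finset G) ⊆ (Finset.univ.filter (· ∈ K)) ∪ Finset.univ.image m := by
    intro x _
    by_cases hx : x ∈ K
    · simp [hx]
    · have := mt (hK x) hx
      push Not at this
      obtain ⟨t, ht, hx1⟩ := this
      apply Finset.mem_union_right
      rw [Finset.mem_image]
      have hB : ((t : G ⧸ B).out)⁻¹ * t ∈ B := by
        rw [← QuotientGroup.eq]; exact Quotient.out_eq' _
      let r := (t : G ⧸ B).out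
      have hB' : r⁻¹ * x * r ∈ B := by
        have : r⁻¹ * x * r = (r⁻¹ * t) * (t⁻¹ * x * t) * (r⁻¹ * t)⁻¹ := by group
        rw [this]
        exact B.mul_mem (B.mul_mem hB ht) (B.inv_mem hB)
      refine ⟨((t : G ⧸ B), ⟨⟨r⁻¹ * x * r, hB'⟩, ?_⟩), Finset.mem_univ _, ?_⟩
      · intro h
        apply hx1
        have h' : r⁻¹ * x * r = 1 := congrArg Subtype.val h
        have : x = r * (r⁻¹ * x * r) * r⁻¹ := by group
        rw [this, h']; simp
      · change r * (r⁻¹ * x * r) * r⁻¹ = x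
        group
  have h1 := (Finset.card_le_card hcov).trans (Finset.card_union_le _ _)
  have h2 : (Finset.univ.image m).card ≤ Nat.card (G ⧸ B) * (Nat.card B - 1) := by
    refine Finset.card_image_le.trans ?_
    rw [Finset.card_univ, Fintype.card_prod, Fintype.card_subtype_compl]
    simp
  have h3 : (Finset.univ.filter (· ∈ K)).card = Nat.card K := by
    rw [Nat.card_eq_fintype_card, Fintype.card_subtype]
  have h4 := B.card_eq_card_quotient_mul_card_subgroup
  rw [h3, Finset.card_univ, ← Nat.card_eq_fintype_card] at h1
  obtain ⟨c, hc⟩ : ∃ c, Nat.card B = c + 1 := ⟨Nat.card B - 1, by have := Nat.card_pos (α := B); omega⟩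
  rw [hc] at h2 h4 ⊢
  simp only [Nat.add_sub_cancel] at h2
  have h5 : Nat.card (G ⧸ B) ≤ Nat.card K := by
    rw [mul_add] at h4
    omega
  rw [h4]
  exact Nat.mul_le_mul_right _ h5

end FrobAux


/-- Frobenius's theorem: if `B` is a proper nontrivial subgroup of a finite group `G`
with `B ∩ gBg⁻¹ = 1` for all `g ∉ B`, then there is a normal subgroup `N` with
`G = N ⋊ B` (i.e. `N ⊓ B = ⊥` and `N ⊔ B = ⊤`), and the conjugation action of `B` on `N`
is fixed-point-free. -/
theorem frobenius_kernel_exists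
    (G : Type*) [Group G] [Finite G] (B : Subgroup G)
    (hB_ne_bot : B ≠ ⊥) (hB_ne_top : B ≠ ⊤)
    (hmal : ∀ g : G, g ∉ B → B ⊓ (B.map (MulAut.conj g).toMonoidHom) = ⊥) :
    ∃ N : Subgroup G, N.Normal ∧ N ⊓ B = ⊥ ∧ N ⊔ B = ⊤ ∧
      ∀ b ∈ B, b ≠ 1 → ∀ x ∈ N, b * x * b⁻¹ = x → x = 1 := by
  have := Fintype.ofFinite G
  have hm : ∀ g b : G, b ∈ B → b ≠ 1 → g⁻¹ * b * g ∈ B → g ∈ B := by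
    intro g b hb hb1 h
    by_contra hg
    have h1 : b ∈ B ⊓ (B.map (MulAut.conj g).toMonoidHom) := by
      refine ⟨hb, g⁻¹ * b * g, h, ?_⟩
      change g * (g⁻¹ * b * g) * g⁻¹ = b
      group
    rw [hmal g hg] at h1
    exact hb1 (Subgroup.mem_bot.1 h1)
  let S : Set G := Set.ofPred fun x => ∀ t, t⁻¹ * x * t ∈ B → x = 1
  let K := Subgroup.normalClosure S
  have hKB : K ⊓ B = ⊥ := by
    rw [eq_bot_iff]
    rintro b ⟨hbK, hbB⟩
    by_contra hb1
    obtain ⟨n, ρ, h1, h2⟩ := FrobAux.exists_sep B hm b hbB (fun h => hb1 (Subgroup.mem_bot.2 h))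
    have h3 : K ≤ MonoidHom.ker ρ := Subgroup.normalClosure_le_normal (fun x hx => h2 x hx)
    exact h1 (h3 hbK)
  have hcard : Nat.card G ≤ Nat.card K * Nat.card B :=
    FrobAux.card_ker_ge B K (fun x hx => Subgroup.subset_normalClosure hx)
  refine ⟨K, Subgroup.normalClosure_normal, hKB, ?_, ?_⟩
  · have hd : Disjoint K B := disjoint_iff.2 hKB
    have hle : Nat.card K * Nat.card B ≤ Nat.card G := by
      rw [← Nat.card_prod]
      exact Nat.card_le_card_of_injective _ (Subgroup.mul_injective_of_disjoint hd)
    exact (Subgroup.isComplement'_of_card_mul_and_disjoint (le_antisymm hle hcard) hd).sup_eq_top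
  · intro b hb hb1 x hx hbx
    have hxB : x ∈ B := by
      refine hm x b hb hb1 ?_
      have : x⁻¹ * b * x = b := by
        have h2 : b * x = x * b := by rw [← eq_mul_inv_iff_mul_eq.1 hbx.symm ]
        rw [mul_assoc, h2, inv_mul_cancel_left]
      rwa [this]
    have : x ∈ K ⊓ B := ⟨hx, hxB⟩
    rw [hKB] at this
    exact Subgroup.mem_bot.1 this
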